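/- Let R be a ring, V and V' R-modules, N : V → V and N' : V' → V' nilpotent R-linear endomorphisms, and k an integer. Let M be a monodromy filtration of N on V centered at k and M' a monodromy filtration of N' on V' centered at k. If f : V → V' is an R-linear map with f ∘ N = N' ∘ f, then f (M i) ≤ M' i for every integer i. -/

import Mathlib

/-- `IsMonodromyFiltration N k M` says that `M` is a monodromy filtration of the nilpotent
endomorphism `N` centered at `k`: a finite increasing `ℤ`-indexed filtration by submodules
such that `N` maps `M i` into `M (i - 2)` and, for every natural number `i`, the map induced
by `N ^ i` from the graded piece `M (k + i) / M (k + i - 1)` to `M (k - i) / M (k - i - 1)`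
is an isomorphism. -/
structure IsMonodromyFiltration {R V : Type*} [Ring R] [AddCommGroup V] [Module R V]
    (N : V →ₗ[R] V) (k : ℤ) (M : ℤ → Submodule R V) : Prop where
  /-- The filtration is increasing. -/
  mono : Monotone M
  /-- The filtration is exhausted below. -/
  eventually_bot : ∃ a : ℤ, ∀ i ≤ a, M i = ⊥
  /-- The filtration is exhausted above. -/
  eventually_top : ∃ b : ℤ, ∀ i, b ≤ i → M i = ⊤
  /-- `N` maps `M i` into `M (i - 2)`. -/
  map_le : ∀ i : ℤ, (M i).map N ≤ M (i - 2)
  /-- For each `i : ℕ`, the map induced by `N ^ i` on graded pieces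
  `M (k + i) / M (k + i - 1) → M (k - i) / M (k - i - 1)` is an isomorphism. -/
  graded_iso : ∀ (i : ℕ) (h1 : ∀ x ∈ M (k + i), (N ^ i) x ∈ M (k - i))
      (h2 : (M (k + i - 1)).comap (M (k + i)).subtype ≤
        ((M (k - i - 1)).comap (M (k - i)).subtype).comap ((N ^ i).restrict h1)),
      Function.Bijective
        (Submodule.mapQ ((M (k + i - 1)).comap (M (k + i)).subtype)
          ((M (k - i - 1)).comap (M (k - i)).subtype) ((N ^ i).restrict h1) h2)

namespace IsMonodromyFiltration

variable {R V : Type*} [Ring R] [AddCommGroup V] [Module R V]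
  {N : V →ₗ[R] V} {k : ℤ} {M : ℤ → Submodule R V}

lemma pow_mem (hM : IsMonodromyFiltration N k M) (n : ℕ) :
    ∀ (i j : ℤ), i - 2 * n ≤ j → ∀ x ∈ M i, (N ^ n) x ∈ M j := by
  induction n with
  | zero =>
    intro i j h x hx
    simpa using hM.mono (by simpa using h) hx
  | succ n ih =>
    intro i j h x hx
    rw [pow_succ, Module.End.mul_apply]
    exact ih (i - 2) j (by push_cast at h; linarith) _ (hM.map_le i ⟨x, hx, rfl⟩)

lemma inj (hM : IsMonodromyFiltration N k M) (i : ℕ) (x : V) (hx : x ∈ M (k + i))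
    (h : (N ^ i) x ∈ M (k - i - 1)) : x ∈ M (k + i - 1) := by
  have h1 : ∀ x ∈ M (k + i), (N ^ i) x ∈ M (k - i) :=
    hM.pow_mem i _ _ (by linarith)
  have h2 : (M (k + i - 1)).comap (M (k + i)).subtype ≤
        ((M (k - i - 1)).comap (M (k - i)).subtype).comap ((N ^ i).restrict h1) := by
    intro y hy
    exact hM.pow_mem i (k + i - 1) (k - i - 1) (by linarith) y.1 hy
  have hb := (hM.graded_iso i h1 h2).1
  have := @hb (Submodule.Quotient.mk ⟨x, hx⟩) 0 (by
    rw [map_zero, Submodule.mapQ_apply, Submodule.Quotient.mk_eq_zero]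
    exact h)
  rw [Submodule.Quotient.mk_eq_zero] at this
  exact this

lemma surj (hM : IsMonodromyFiltration N k M) (i : ℕ) (y : V) (hy : y ∈ M (k - i)) :
    ∃ x ∈ M (k + i), y - (N ^ i) x ∈ M (k - i - 1) := by
  have h1 : ∀ x ∈ M (k + i), (N ^ i) x ∈ M (k - i) :=
    hM.pow_mem i _ _ (by linarith)
  have h2 : (M (k + i - 1)).comap (M (k + i)).subtype ≤
        ((M (k - i - 1)).comap (M (k - i)).subtype).comap ((N ^ i).restrict h1) := by
    intro y hy
    exact hM.pow_mem i (k + i - 1) (k - i - 1) (by linarith) y.1 hy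
  obtain ⟨q, hq⟩ := (hM.graded_iso i h1 h2).2 (Submodule.Quotient.mk ⟨y, hy⟩)
  obtain ⟨x, rfl⟩ := Submodule.Quotient.mk_surjective _ q
  rw [Submodule.mapQ_apply] at hq
  have := (Submodule.Quotient.eq _).1 hq.symm
  exact ⟨x.1, x.2, this⟩

lemma exists_pow_eq (hM : IsMonodromyFiltration N k M) (m : ℕ) (y : V) (hy : y ∈ M (k - m)) :
    ∃ z ∈ M (k + m), (N ^ m) z = y := by
  obtain ⟨a, ha⟩ := hM.eventually_bot
  have key : ∀ n : ℕ, ∀ m : ℕ, k - m - n ≤ a → ∀ y ∈ M (k - m),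
      ∃ z ∈ M (k + m), (N ^ m) z = y := by
    intro n
    induction n with
    | zero =>
      intro m h y hy
      rw [ha _ (by simpa using h), Submodule.mem_bot] at hy
      exact ⟨0, zero_mem _, by simp [hy]⟩
    | succ n ih =>
      intro m h y hy
      obtain ⟨x, hx, hxy⟩ := hM.surj m y hy
      obtain ⟨z, hz, hzy⟩ := ih (m + 1) (by push_cast at h ⊢; linarith) (y - (N ^ m) x)
        (hM.mono (by push_cast; linarith) hxy)
      refine ⟨x + N z, add_mem hx (hM.mono ?_ (hM.map_le _ ⟨z, hz, rfl⟩)), ?_⟩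
      · push_cast; linarith
      · rw [pow_succ, Module.End.mul_apply] at hzy
        rw [map_add, hzy]; abel
  exact key (k - m - a).toNat m (by have := Int.self_le_toNat (k - m - a); linarith) y hy

lemma ker_le (hM : IsMonodromyFiltration N k M) (i : ℕ) (x : V) (hx : (N ^ (i + 1)) x = 0) :
    x ∈ M (k + i) := by
  obtain ⟨b, hb⟩ := hM.eventually_top
  have key : ∀ n : ℕ, ∀ i : ℕ, b ≤ k + i + n → (N ^ (i + 1)) x = 0 → x ∈ M (k + i) := by
    intro n
    induction n with
    | zero =>
      intro i h _
      rw [hb _ (by simpa using h)]; trivial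
    | succ n ih =>
      intro i h hx
      have h1 := ih (i + 1) (by push_cast at h ⊢; linarith)
        (by rw [pow_succ', Module.End.mul_apply, hx, map_zero])
      have h2 := hM.inj (i + 1) x h1 (by rw [hx]; exact zero_mem _)
      exact hM.mono (by push_cast; linarith) h2
  exact key (b - k - i).toNat i (by have := Int.self_le_toNat (b - k - i); linarith) hx

end IsMonodromyFiltration

/-- Functoriality of the monodromy filtration: a linear map intertwining two nilpotent
endomorphisms is compatible with their monodromy filtrations centered at the same `k`. -/
theorem monodromy_filtration_functorial {R V V' : Type*} [Ring R]
    [AddCommGroup V] [Module R V] [AddCommGroup V'] [Module R V']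
    (N : V →ₗ[R] V) (N' : V' →ₗ[R] V') (hN : IsNilpotent N) (hN' : IsNilpotent N') (k : ℤ)
    (M : ℤ → Submodule R V) (M' : ℤ → Submodule R V')
    (hM : IsMonodromyFiltration N k M) (hM' : IsMonodromyFiltration N' k M')
    (f : V →ₗ[R] V') (hf : f.comp N = N'.comp f) :
    ∀ i : ℤ, (M i).map f ≤ M' i := by
  have hc : ∀ (n : ℕ) (x : V), f ((N ^ n) x) = (N' ^ n) (f x) := by
    intro n
    induction n with
    | zero => intro x; simp
    | succ n ih =>
      intro x
      rw [pow_succ, pow_succ, Module.End.mul_apply, Module.End.mul_apply, ih]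
      congr 1
      exact LinearMap.congr_fun hf x
  obtain ⟨b, hb⟩ := hM'.eventually_top
  have key : ∀ n : ℕ, ∀ i : ℕ, b ≤ k + i + n → ∀ x ∈ M (k + i), f x ∈ M' (k + i) := by
    intro n
    induction n with
    | zero =>
      intro i h x _
      rw [hb _ (by simpa using h)]; trivial
    | succ n ih =>
      intro i h x hx
      obtain ⟨z, hz, hzx⟩ := hM.exists_pow_eq (i + 2) ((N ^ (i + 1)) x)
        (hM.pow_mem (i + 1) (k + i) _ (by push_cast; linarith) x hx)
      have h1 : f z ∈ M' (k + (i + 2 : ℕ)) :=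
        ih (i + 2) (by push_cast at h ⊢; linarith) z hz
      have h2 : N' (f z) ∈ M' (k + i) :=
        hM'.mono (by push_cast; linarith) (hM'.map_le _ ⟨_, h1, rfl⟩)
      have h3 : f (x - N z) ∈ M' (k + i) := by
        apply hM'.ker_le
        rw [← hc, map_sub, ← hzx, pow_succ N (i + 1), Module.End.mul_apply, sub_self, map_zero]
      have h4 : f (N z) = N' (f z) := LinearMap.congr_fun hf z
      have h5 := add_mem h3 h2
      rwa [map_sub, h4, sub_add_cancel] at h5
  have pos : ∀ i : ℕ, ∀ x ∈ M (k + i), f x ∈ M' (k + i) := fun i =>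
    key (b - k - i).toNat i (by have := Int.self_le_toNat (b - k - i); linarith)
  rintro i _ ⟨x, hx, rfl⟩
  rcases le_total k i with h | h
  · obtain ⟨n, hn⟩ := Int.eq_ofNat_of_zero_le (sub_nonneg.2 h)
    obtain rfl : i = k + n := by linarith
    exact pos n x hx
  · obtain ⟨n, hn⟩ := Int.eq_ofNat_of_zero_le (sub_nonneg.2 h)
    obtain rfl : i = k - n := by linarith
    obtain ⟨z, hz, rfl⟩ := hM.exists_pow_eq n x hx
    rw [hc]
    exact hM'.pow_mem n (k + n) _ (by linarith) _ (pos n z hz)
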